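/- The set of simple functions (measurable functions with finite range) is dense in M_F if and only if every A ∈ 𝒜_> can be written as a union of finitely many μ-atoms. -/

import Mathlib

open MeasureTheory Topology Set Pointwise

/-- The set of all real-valued measurable functions on `X`, as a subtype. -/
abbrev Mble (X : Type*) [MeasurableSpace X] : Type _ := {f : X → ℝ // Measurable f}

/-- The basic set `B(f, A, ε)`: all `g` such that for some measurable null set `N`,
`sup_{x ∈ A \ N} |f x - g x| < ε`. -/
def FBall {X : Type*} [MeasurableSpace X] (μ : Measure X) (f : Mble X) (A : Set X)
    (ε : ℝ) : Set (Mble X) :=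
  {g | ∃ N : Set X, MeasurableSet N ∧ μ N = 0 ∧
        ∃ b : ℝ, b < ε ∧ ∀ x ∈ A \ N, |f.1 x - g.1 x| ≤ b}

/-- The `F_μ`-topology on `Mble X`, generated by the sets `B(f, A, ε)` with
`A` measurable of finite measure and `ε > 0`. -/
def FTop {X : Type*} [MeasurableSpace X] (μ : Measure X) : TopologicalSpace (Mble X) :=
  TopologicalSpace.generateFrom
    {S | ∃ (f : Mble X) (A : Set X) (ε : ℝ),
        MeasurableSet A ∧ μ A < ⊤ ∧ 0 < ε ∧ S = FBall μ f A ε}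

/-- A `μ`-atom: a measurable set of positive measure admitting no decomposition into two
disjoint measurable pieces of positive measure. -/
def MuAtom {X : Type*} [MeasurableSpace X] (μ : Measure X) (A : Set X) : Prop :=
  MeasurableSet A ∧ 0 < μ A ∧
    ¬ ∃ B C : Set X, MeasurableSet B ∧ MeasurableSet C ∧ Disjoint B C ∧
        B ∪ C = A ∧ 0 < μ B ∧ 0 < μ C

/-- `G` is a union of finitely many `μ`-atoms. -/
def FinAtomUnion {X : Type*} [MeasurableSpace X] (μ : Measure X) (G : Set X) : Prop :=
  ∃ (n : ℕ) (F : Fin n → Set X), (∀ i, MuAtom μ (F i)) ∧ G = ⋃ i, F i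

/-- `L^∞_G`: the measurable functions that are essentially bounded on `G`. -/
def Linf {X : Type*} [MeasurableSpace X] (μ : Measure X) (G : Set X) : Set (Mble X) :=
  {f | ∃ M₀ : ℝ, 0 < M₀ ∧ ∃ N : Set X, MeasurableSet N ∧ μ N = 0 ∧
        ∀ x ∈ G \ N, |f.1 x| ≤ M₀}

/-- The intersection `⋂_{G ∈ 𝒜_>} L^∞_G`. -/
def InterLinf {X : Type*} [MeasurableSpace X] (μ : Measure X) : Set (Mble X) :=
  ⋂ G ∈ {A : Set X | MeasurableSet A ∧ 0 < μ A ∧ μ A < ⊤}, Linf μ G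

/-- The zero function as an element of `Mble X`. -/
def zeroM {X : Type*} [MeasurableSpace X] : Mble X := ⟨fun _ => 0, measurable_const⟩

/-- `μ` is hemifinite: some sequence in `𝒜_>` almost contains every member of `𝒜_>`. -/
def Hemifinite {X : Type*} [MeasurableSpace X] (μ : Measure X) : Prop :=
  ∃ A : ℕ → Set X, (∀ n, MeasurableSet (A n) ∧ 0 < μ (A n) ∧ μ (A n) < ⊤) ∧
    ∀ F : Set X, MeasurableSet F → 0 < μ F → μ F < ⊤ → ∃ n, μ (F \ A n) = 0

/-- `G⁺`: functions strictly positive μ-almost everywhere on `G`. -/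
def Gplus {X : Type*} [MeasurableSpace X] (μ : Measure X) (G : Set X) : Set (Mble X) :=
  {f | ∃ N : Set X, MeasurableSet N ∧ μ N = 0 ∧ ∀ x ∈ G \ N, 0 < f.1 x}

/-- `G⁰`: functions nonnegative μ-almost everywhere on `G`. -/
def Gzero {X : Type*} [MeasurableSpace X] (μ : Measure X) (G : Set X) : Set (Mble X) :=
  {f | ∃ N : Set X, MeasurableSet N ∧ μ N = 0 ∧ ∀ x ∈ G \ N, 0 ≤ f.1 x}

instance {X : Type*} [MeasurableSpace X] : Add (Mble X) :=
  ⟨fun f g => ⟨f.1 + g.1, f.2.add g.2⟩⟩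

/-!
If simple functions are dense, every measurable function is essentially bounded on each set of
finite measure, because essential boundedness on such a set is a closed condition. A set of
positive measure that is not a finite union of atoms splits into two pieces of positive measure, at
least one of which again fails to be such a union; iterating yields infinitely many disjoint pieces
`D n` of positive measure, and a measurable function equal to `n` on `D n` is not essentially
bounded. Conversely, a measurable function is a.e. constant on each atom, hence agrees a.e. with a
simple function on any finite union of atoms.
-/

section

variable {X : Type*} [MeasurableSpace X] {μ : Measure X}

section FTopology

variable {f g : Mble X} {A B : Set X} {ε δ : ℝ}

theorem exists_null_forall_diff_iff_ae {p : X → Prop} :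
    (∃ N, MeasurableSet N ∧ μ N = 0 ∧ ∀ x ∈ A \ N, p x) ↔ ∀ᵐ x ∂μ, x ∈ A → p x := by
  constructor
  · rintro ⟨N, -, hN, h⟩
    filter_upwards [measure_eq_zero_iff_ae_notMem.1 hN] with x hxN hxA
    exact h x ⟨hxA, hxN⟩
  · intro h
    obtain ⟨N, hsub, hN, hN0⟩ := exists_measurable_superset_of_null (ae_iff.1 h)
    exact ⟨N, hN, hN0, fun x hx => by_contra fun hpx => hx.2 (hsub fun hp => hpx (hp hx.1))⟩

theorem mem_fBall_iff :
    g ∈ FBall μ f A ε ↔ ∃ b < ε, ∀ᵐ x ∂μ, x ∈ A → |f.1 x - g.1 x| ≤ b := by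
  simp only [FBall, mem_ofPred_eq, ← exists_null_forall_diff_iff_ae]
  exact ⟨fun ⟨N, hN, hN0, b, hb, h⟩ => ⟨b, hb, N, hN, hN0, h⟩,
    fun ⟨b, hb, N, hN, hN0, h⟩ => ⟨N, hN, hN0, b, hb, h⟩⟩

theorem mem_linf_iff : f ∈ Linf μ A ↔ ∃ M, ∀ᵐ x ∂μ, x ∈ A → |f.1 x| ≤ M := by
  simp only [Linf, mem_ofPred_eq, exists_null_forall_diff_iff_ae]
  constructor
  · rintro ⟨M, -, hM⟩
    exact ⟨M, hM⟩
  · rintro ⟨M, hM⟩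
    exact ⟨max M 1, by positivity, hM.mono fun x hx hxA => (hx hxA).trans (le_max_left M 1)⟩

theorem mem_fBall_of_ae_eq (hε : 0 < ε) (h : ∀ᵐ x ∂μ, x ∈ A → g.1 x = f.1 x) :
    g ∈ FBall μ f A ε :=
  mem_fBall_iff.2 ⟨0, hε, h.mono fun x hx hxA => by simp [hx hxA]⟩

theorem self_mem_fBall (hε : 0 < ε) : f ∈ FBall μ f A ε :=
  mem_fBall_of_ae_eq hε (.of_forall fun _ _ => rfl)

theorem fBall_subset_fBall (hAB : A ⊆ B) (hεδ : ε ≤ δ) : FBall μ f B ε ⊆ FBall μ f A δ :=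
  fun _ ⟨N, hN, hN0, b, hb, h⟩ =>
    ⟨N, hN, hN0, b, hb.trans_le hεδ, fun x hx => h x ⟨hAB hx.1, hx.2⟩⟩

theorem exists_fBall_subset_fBall (hg : g ∈ FBall μ f A ε) :
    ∃ δ > 0, FBall μ g A δ ⊆ FBall μ f A ε := by
  obtain ⟨b, hb, hfg⟩ := mem_fBall_iff.1 hg
  refine ⟨ε - b, sub_pos.2 hb, fun h hh => ?_⟩
  obtain ⟨c, hc, hgh⟩ := mem_fBall_iff.1 hh
  refine mem_fBall_iff.2 ⟨b + c, by linarith, ?_⟩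
  filter_upwards [hfg, hgh] with x hfgx hghx hxA
  exact (abs_sub_le _ _ _).trans (add_le_add (hfgx hxA) (hghx hxA))

theorem isTopologicalBasis_fTop (μ : Measure X) :
    @TopologicalSpace.IsTopologicalBasis (Mble X) (FTop μ)
      {S | ∃ (f : Mble X) (A : Set X) (ε : ℝ),
        MeasurableSet A ∧ μ A < ⊤ ∧ 0 < ε ∧ S = FBall μ f A ε} := by
  let := FTop μ
  refine ⟨?_, ?_, rfl⟩
  · rintro _ ⟨f₁, A₁, ε₁, hA₁, hA₁_fin, -, rfl⟩ _ ⟨f₂, A₂, ε₂, hA₂, hA₂_fin, -, rfl⟩ g ⟨hg₁, hg₂⟩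
    obtain ⟨δ₁, hδ₁, hsub₁⟩ := exists_fBall_subset_fBall hg₁
    obtain ⟨δ₂, hδ₂, hsub₂⟩ := exists_fBall_subset_fBall hg₂
    have hδ : 0 < min δ₁ δ₂ := lt_min hδ₁ hδ₂
    refine ⟨FBall μ g (A₁ ∪ A₂) (min δ₁ δ₂), ⟨g, A₁ ∪ A₂, min δ₁ δ₂, hA₁.union hA₂,
      measure_union_lt_top hA₁_fin hA₂_fin, hδ, rfl⟩, self_mem_fBall hδ, subset_inter ?_ ?_⟩
    · exact (fBall_subset_fBall subset_union_left (min_le_left _ _)).trans hsub₁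
    · exact (fBall_subset_fBall subset_union_right (min_le_right _ _)).trans hsub₂
  · exact sUnion_eq_univ_iff.2 fun f =>
      ⟨FBall μ f ∅ 1, ⟨f, ∅, 1, .empty, by simp, one_pos, rfl⟩, self_mem_fBall one_pos⟩

theorem dense_fTop_of_forall_fBall {S : Set (Mble X)}
    (h : ∀ (f : Mble X) (A : Set X) (ε : ℝ), MeasurableSet A → μ A < ⊤ → 0 < ε →
      ∃ g ∈ S, g ∈ FBall μ f A ε) :
    @Dense (Mble X) (FTop μ) S := by
  let := FTop μ
  refine (isTopologicalBasis_fTop μ).dense_iff.2 ?_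
  rintro _ ⟨f, A, ε, hA, hA_fin, hε, rfl⟩ -
  obtain ⟨g, hgS, hg⟩ := h f A ε hA hA_fin hε
  exact ⟨g, hg, hgS⟩

theorem mem_linf_of_mem_fBall (hgf : g ∈ FBall μ f A ε) (hg : g ∈ Linf μ A) : f ∈ Linf μ A := by
  obtain ⟨b, -, hb⟩ := mem_fBall_iff.1 hgf
  obtain ⟨M, hM⟩ := mem_linf_iff.1 hg
  refine mem_linf_iff.2 ⟨b + M, ?_⟩
  filter_upwards [hb, hM] with x hbx hMx hxA
  calc |f.1 x| = |(f.1 x - g.1 x) + g.1 x| := by rw [sub_add_cancel]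
    _ ≤ |f.1 x - g.1 x| + |g.1 x| := abs_add_le _ _
    _ ≤ b + M := add_le_add (hbx hxA) (hMx hxA)

theorem isClosed_linf (hA : MeasurableSet A) (hA_fin : μ A < ⊤) :
    IsClosed[FTop μ] (Linf μ A) := by
  let := FTop μ
  refine isOpen_compl_iff.1 ((isTopologicalBasis_fTop μ).isOpen_iff.2 fun f hf => ?_)
  exact ⟨FBall μ f A 1, ⟨f, A, 1, hA, hA_fin, one_pos, rfl⟩, self_mem_fBall one_pos,
    fun _ hgf hg => hf (mem_linf_of_mem_fBall hgf hg)⟩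

theorem mem_linf_of_finite_range (hf : (range f.1).Finite) : f ∈ Linf μ A := by
  obtain ⟨M, hM⟩ := hf.isBounded.exists_norm_le
  exact mem_linf_iff.2 ⟨M, .of_forall fun x _ => hM _ (mem_range_self x)⟩

theorem mem_linf_of_dense_finite_range
    (hd : @Dense (Mble X) (FTop μ) {f : Mble X | (range f.1).Finite})
    (hA : MeasurableSet A) (hA_fin : μ A < ⊤) (f : Mble X) : f ∈ Linf μ A :=
  let := FTop μ
  closure_minimal (fun _ => mem_linf_of_finite_range) (isClosed_linf hA hA_fin) (hd f)

theorem exists_finite_range_of_ae_mem_finite (f : Mble X) {T : Set ℝ} (hT : T.Finite)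
    (h : ∀ᵐ x ∂μ, x ∈ A → f.1 x ∈ T) :
    ∃ s : Mble X, (range s.1).Finite ∧ ∀ᵐ x ∂μ, x ∈ A → s.1 x = f.1 x := by
  refine ⟨⟨(f.1 ⁻¹' T).indicator f.1, f.2.indicator (f.2 hT.measurableSet)⟩,
    (hT.insert 0).subset fun r hr => ?_,
    h.mono fun x hx hxA => indicator_of_mem (s := f.1 ⁻¹' T) (hx hxA) f.1⟩
  exact (mem_range_indicator.1 hr).imp And.left fun ⟨_, hxT, hxr⟩ => hxr ▸ hxT

end FTopology

section Atoms

variable {A B F G : Set X} {β : Type*} [MeasurableSpace β] {f : X → β}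

theorem finAtomUnion_iUnion {ι : Type*} [Finite ι] {F : ι → Set X} (hF : ∀ i, MuAtom μ (F i)) :
    FinAtomUnion μ (⋃ i, F i) := by
  obtain ⟨n, ⟨e⟩⟩ := Finite.exists_equiv_fin ι
  exact ⟨n, F ∘ e.symm, fun i => hF (e.symm i), (e.symm.surjective.iUnion_comp F).symm⟩

theorem MuAtom.finAtomUnion (hA : MuAtom μ A) : FinAtomUnion μ A :=
  iUnion_const (ι := Unit) A ▸ finAtomUnion_iUnion fun _ => hA

theorem FinAtomUnion.union (hA : FinAtomUnion μ A) (hB : FinAtomUnion μ B) :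
    FinAtomUnion μ (A ∪ B) := by
  obtain ⟨m, F, hF, rfl⟩ := hA
  obtain ⟨n, G, hG, rfl⟩ := hB
  rw [← iUnion_sumElim]
  exact finAtomUnion_iUnion (Sum.forall.2 ⟨hF, hG⟩)

theorem MuAtom.ae_mem_or_ae_notMem (hF : MuAtom μ F) {U : Set X} (hU : MeasurableSet U) :
    (∀ᵐ x ∂μ, x ∈ F → x ∈ U) ∨ ∀ᵐ x ∂μ, x ∈ F → x ∉ U := by
  obtain ⟨hFm, -, hsplit⟩ := hF
  have hnull : μ (F \ U) = 0 ∨ μ (F ∩ U) = 0 := by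
    by_contra! h
    exact hsplit ⟨F \ U, F ∩ U, hFm.diff hU, hFm.inter hU, disjoint_sdiff_inter,
      sdiff_union_inter F U, pos_iff_ne_zero.2 h.1, pos_iff_ne_zero.2 h.2⟩
  refine hnull.imp (fun h => ?_) (fun h => ?_)
  · filter_upwards [measure_eq_zero_iff_ae_notMem.1 h] with x hx hxF
    exact by_contra fun hxU => hx ⟨hxF, hxU⟩
  · filter_upwards [measure_eq_zero_iff_ae_notMem.1 h] with x hx hxF hxU
    exact hx ⟨hxF, hxU⟩

theorem MuAtom.exists_ae_eq_const [MeasurableSpace.CountablySeparated β] (hF : MuAtom μ F)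
    (hf : Measurable f) : ∃ c, ∀ᵐ x ∂μ, x ∈ F → f x = c := by
  obtain ⟨x₀, -⟩ := nonempty_of_measure_ne_zero hF.2.1.ne'
  have : Nonempty β := ⟨f x₀⟩
  simp only [← Filter.eventually_inf_principal]
  refine Filter.exists_eventuallyEq_const_of_forall_separating MeasurableSet fun U hU => ?_
  simp only [Filter.eventually_inf_principal]
  exact hF.ae_mem_or_ae_notMem (hf hU)

theorem FinAtomUnion.exists_finite_ae_mem [MeasurableSpace.CountablySeparated β]
    (hG : FinAtomUnion μ G) (hf : Measurable f) :
    ∃ T : Set β, T.Finite ∧ ∀ᵐ x ∂μ, x ∈ G → f x ∈ T := by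
  obtain ⟨n, F, hF, rfl⟩ := hG
  choose c hc using fun i => (hF i).exists_ae_eq_const hf
  refine ⟨range c, finite_range c, ?_⟩
  filter_upwards [ae_all_iff.2 hc] with x hx hxF
  obtain ⟨i, hi⟩ := mem_iUnion.1 hxF
  exact ⟨i, (hx i hi).symm⟩

theorem exists_subset_not_finAtomUnion (hA : MeasurableSet A) (hA0 : 0 < μ A)
    (hA_not : ¬ FinAtomUnion μ A) :
    ∃ B ⊆ A, (MeasurableSet B ∧ 0 < μ B ∧ ¬ FinAtomUnion μ B) ∧ 0 < μ (A \ B) := by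
  obtain ⟨B, C, hB, hC, hdisj, rfl, hB0, hC0⟩ :
      ∃ B C, MeasurableSet B ∧ MeasurableSet C ∧ Disjoint B C ∧ B ∪ C = A ∧ 0 < μ B ∧ 0 < μ C :=
    by_contra fun h => hA_not (MuAtom.finAtomUnion ⟨hA, hA0, h⟩)
  by_cases hB_fin : FinAtomUnion μ B
  · have hC_not : ¬ FinAtomUnion μ C := fun hC_fin => hA_not (hB_fin.union hC_fin)
    refine ⟨C, subset_union_right, ⟨hC, hC0, hC_not⟩, ?_⟩
    rwa [union_sdiff_right, hdisj.sdiff_eq_left]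
  · refine ⟨B, subset_union_left, ⟨hB, hB0, hB_fin⟩, ?_⟩
    rwa [union_sdiff_left, hdisj.symm.sdiff_eq_left]

theorem exists_seq_disjoint_of_not_finAtomUnion (hA : MeasurableSet A) (hA0 : 0 < μ A)
    (hA_not : ¬ FinAtomUnion μ A) :
    ∃ D : ℕ → Set X, (∀ n, MeasurableSet (D n)) ∧ Pairwise (Function.onFun Disjoint D) ∧
      (∀ n, D n ⊆ A) ∧ ∀ n, 0 < μ (D n) := by
  let Bad := {B : Set X // MeasurableSet B ∧ 0 < μ B ∧ ¬ FinAtomUnion μ B}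
  have hstep (B : Bad) : ∃ C : Bad, C.1 ⊆ B.1 ∧ 0 < μ (B.1 \ C.1) := by
    obtain ⟨C, hCB, hC, hpos⟩ := exists_subset_not_finAtomUnion B.2.1 B.2.2.1 B.2.2.2
    exact ⟨⟨C, hC⟩, hCB, hpos⟩
  choose next hnext_sub hnext_pos using hstep
  let S (n : ℕ) : Bad := next^[n] ⟨A, hA, hA0, hA_not⟩
  have hS_succ (n : ℕ) : S (n + 1) = next (S n) := Function.iterate_succ_apply' next n _
  have hS_anti : Antitone fun n => (S n).1 :=
    antitone_nat_of_succ_le fun n => hS_succ n ▸ hnext_sub (S n)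
  have hS_pos (n : ℕ) : 0 < μ ((S n).1 \ (S (n + 1)).1) := hS_succ n ▸ hnext_pos (S n)
  refine ⟨fun n => (S n).1 \ (S (n + 1)).1, fun n => (S n).2.1.diff (S (n + 1)).2.1, ?_,
    fun n => sdiff_subset.trans (hS_anti n.zero_le), hS_pos⟩
  refine (pairwise_disjoint_on _).2 fun m n hmn => ?_
  exact disjoint_sdiff_left.mono_right (sdiff_subset.trans (hS_anti (Nat.succ_le_of_lt hmn)))

theorem exists_notMem_linf_of_seq_disjoint {D : ℕ → Set X} (hD : ∀ n, MeasurableSet (D n))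
    (hdisj : Pairwise (Function.onFun Disjoint D)) (hDA : ∀ n, D n ⊆ A) (hpos : ∀ n, 0 < μ (D n)) :
    ∃ f : Mble X, f ∉ Linf μ A := by
  obtain ⟨f, hf, hfD⟩ : ∃ f : X → ℝ, Measurable f ∧ ∀ n : ℕ, EqOn f (fun _ => (n : ℝ)) (D n) :=
    exists_measurable_piecewise D hD _ (fun _ => measurable_const) fun m n hmn x hx =>
      ((hdisj hmn).le_bot hx).elim
  refine ⟨⟨f, hf⟩, fun hfA => ?_⟩
  obtain ⟨M, hM⟩ := mem_linf_iff.1 hfA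
  obtain ⟨n, hn⟩ := exists_nat_gt M
  refine (hpos n).ne' (measure_eq_zero_iff_ae_notMem.2 ?_)
  filter_upwards [hM] with x hMx hxD
  have hfx : f x = n := hfD n hxD
  exact hn.not_ge (hfx ▸ (le_abs_self (f x)).trans (hMx (hDA n hxD)))

theorem finAtomUnion_of_forall_mem_linf (hA : MeasurableSet A) (hA0 : 0 < μ A)
    (h : ∀ f : Mble X, f ∈ Linf μ A) : FinAtomUnion μ A := by
  by_contra hA_not
  obtain ⟨D, hD, hdisj, hDA, hpos⟩ := exists_seq_disjoint_of_not_finAtomUnion hA hA0 hA_not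
  obtain ⟨f, hf⟩ := exists_notMem_linf_of_seq_disjoint hD hdisj hDA hpos
  exact hf (h f)

end Atoms

end

theorem stmt8_general {X : Type*} [MeasurableSpace X] (μ : Measure X) :
    @Dense (Mble X) (FTop μ) {f : Mble X | (Set.range f.1).Finite} ↔
      ∀ A : Set X, MeasurableSet A → 0 < μ A → μ A < ⊤ → FinAtomUnion μ A := by
  constructor
  · intro hd A hA hA0 hA_fin
    exact finAtomUnion_of_forall_mem_linf hA hA0 (mem_linf_of_dense_finite_range hd hA hA_fin)
  · refine fun h => dense_fTop_of_forall_fBall fun f A ε hA hA_fin hε => ?_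
    obtain ⟨T, hT, hfT⟩ : ∃ T : Set ℝ, T.Finite ∧ ∀ᵐ x ∂μ, x ∈ A → f.1 x ∈ T := by
      rcases eq_zero_or_pos (μ A) with hA0 | hA0
      · exact ⟨∅, finite_empty, measure_eq_zero_iff_ae_notMem.1 hA0⟩
      · exact (h A hA hA0 hA_fin).exists_finite_ae_mem f.2
    obtain ⟨s, hs, hsf⟩ := exists_finite_range_of_ae_mem_finite f hT hfT
    exact ⟨s, hs, mem_fBall_of_ae_eq hε hsf⟩

/-- the simple functions (measurable functions of finite range) are dense
in `M_F` iff every `A ∈ 𝒜_>` is a finite union of `μ`-atoms. -/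
theorem stmt8 {X : Type*} [MeasurableSpace X] (μ : Measure X)
    (hpos : 0 < μ Set.univ)
    (hsub : ∀ A : Set X, MeasurableSet A → μ A = ⊤ →
      ∃ B, B ⊆ A ∧ MeasurableSet B ∧ 0 < μ B ∧ μ B < ⊤) :
    @Dense (Mble X) (FTop μ) {f : Mble X | (Set.range f.1).Finite} ↔
      ∀ A : Set X, MeasurableSet A → 0 < μ A → μ A < ⊤ → FinAtomUnion μ A := by
  exact stmt8_general μ
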